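/- A 4-form σ on ℝ^8 satisfies Ω_Φ(σ) = 0 if and only if σ is anti-self-dual, i.e., σ_{ijkl} = −(1/24) ε_{ijklabcd} σ_{abcd} for all i,j,k,l; moreover this eigenspace has dimension 35. -/

import Mathlib

/-!
We work in ℝ⁸ with the standard basis `e₀, …, e₇`.  A `k`-form is a totally antisymmetric
map `(Fin 8)^k → ℝ`; repeated indices are summed over `Fin 8` and `kd` is the Kronecker
delta.  `Phi` is the fundamental 4-form of the standard `Spin(7)`-structure on ℝ⁸,
`Φ = -e₀₁₂₇ + e₀₂₃₆ - e₀₃₄₇ - e₀₅₆₇ + e₀₁₄₆ + e₀₂₄₅ - e₀₁₃₅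
     - e₃₄₅₆ - e₁₄₅₇ - e₁₂₅₆ - e₁₂₃₄ - e₂₃₅₇ - e₁₃₆₇ + e₂₄₆₇`.
-/

noncomputable section

/-- Kronecker delta on `Fin 8`. -/
def kd (a b : Fin 8) : ℝ := if a = b then 1 else 0

/-- Component at the indices `(i,j,k,l)` of the wedge product `e_a ∧ e_b ∧ e_c ∧ e_d`
of standard coordinate 1-forms, normalized so that `(e_a ∧ e_b ∧ e_c ∧ e_d)_{abcd} = 1`;
it is the alternating sum of products of Kronecker deltas. -/
def wedge4 (a b c d i j k l : Fin 8) : ℝ :=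
  Matrix.det !![kd a i, kd a j, kd a k, kd a l;
                kd b i, kd b j, kd b k, kd b l;
                kd c i, kd c j, kd c k, kd c l;
                kd d i, kd d j, kd d k, kd d l]

/-- The fundamental 4-form `Φ` of the standard `Spin(7)`-structure on `ℝ⁸`, in components:
the totally antisymmetric 4-tensor with `Φ_{0127} = -1`, `Φ_{0236} = 1`, `Φ_{0347} = -1`,
`Φ_{0567} = -1`, `Φ_{0146} = 1`, `Φ_{0245} = 1`, `Φ_{0135} = -1`, `Φ_{3456} = -1`,
`Φ_{1457} = -1`, `Φ_{1256} = -1`, `Φ_{1234} = -1`, `Φ_{2357} = -1`, `Φ_{1367} = -1`,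
`Φ_{2467} = 1`, all components not obtained from these by permutation being zero. -/
def Phi (i j k l : Fin 8) : ℝ :=
    -wedge4 0 1 2 7 i j k l + wedge4 0 2 3 6 i j k l - wedge4 0 3 4 7 i j k l
  - wedge4 0 5 6 7 i j k l + wedge4 0 1 4 6 i j k l + wedge4 0 2 4 5 i j k l
  - wedge4 0 1 3 5 i j k l - wedge4 3 4 5 6 i j k l - wedge4 1 4 5 7 i j k l
  - wedge4 1 2 5 6 i j k l - wedge4 1 2 3 4 i j k l - wedge4 2 3 5 7 i j k l
  - wedge4 1 3 6 7 i j k l + wedge4 2 4 6 7 i j k l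

/-- The Levi-Civita symbol on eight indices: `eps8 f` is the sign of
`(f 0, …, f 7)` as a permutation of `(0, …, 7)`, and `0` if an index repeats. -/
def eps8 (f : Fin 8 → Fin 8) : ℝ :=
  if h : Function.Bijective f then ((Equiv.Perm.sign (Equiv.ofBijective f h) : ℤ) : ℝ) else 0

/-- Totally antisymmetric 4-tensors on ℝ⁸ (4-forms). -/
def FourForm : Submodule ℝ (Fin 8 → Fin 8 → Fin 8 → Fin 8 → ℝ) where
  carrier :=
    {σ | ∀ i j k l, σ i j k l = -σ j i k l ∧ σ i j k l = -σ i k j l ∧ σ i j k l = -σ i j l k}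
  zero_mem' := by intro i j k l; refine ⟨by simp, by simp, by simp⟩
  add_mem' := by
    intro a b ha hb i j k l
    refine ⟨?_, ?_, ?_⟩
    · simp only [Pi.add_apply, (ha i j k l).1, (hb i j k l).1]; ring
    · simp only [Pi.add_apply, (ha i j k l).2.1, (hb i j k l).2.1]; ring
    · simp only [Pi.add_apply, (ha i j k l).2.2, (hb i j k l).2.2]; ring
  smul_mem' := by
    intro c a ha i j k l
    refine ⟨?_, ?_, ?_⟩
    · simp only [Pi.smul_apply, smul_eq_mul, (ha i j k l).1]; ring
    · simp only [Pi.smul_apply, smul_eq_mul, (ha i j k l).2.1]; ring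
    · simp only [Pi.smul_apply, smul_eq_mul, (ha i j k l).2.2]; ring

/-- The operator `Ω_Φ` on 4-tensors:
`(Ω_Φ(σ))_{ijkl} = σ_{ijpq}Φ_{pqkl} + σ_{ikpq}Φ_{pqlj} + σ_{ilpq}Φ_{pqjk}
                 + σ_{jkpq}Φ_{pqil} + σ_{jlpq}Φ_{pqki} + σ_{klpq}Φ_{pqij}`. -/
def OmegaOp : (Fin 8 → Fin 8 → Fin 8 → Fin 8 → ℝ) →ₗ[ℝ] (Fin 8 → Fin 8 → Fin 8 → Fin 8 → ℝ) where
  toFun σ := fun i j k l =>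
    (∑ p, ∑ q, σ i j p q * Phi p q k l) + (∑ p, ∑ q, σ i k p q * Phi p q l j)
    + (∑ p, ∑ q, σ i l p q * Phi p q j k) + (∑ p, ∑ q, σ j k p q * Phi p q i l)
    + (∑ p, ∑ q, σ j l p q * Phi p q k i) + (∑ p, ∑ q, σ k l p q * Phi p q i j)
  map_add' σ τ := by
    funext i j k l
    simp only [Pi.add_apply, add_mul, Finset.sum_add_distrib]
    ring
  map_smul' c σ := by
    funext i j k l
    simp only [Pi.smul_apply, smul_eq_mul, RingHom.id_apply, Finset.mul_sum, mul_assoc, mul_add]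

/-!
Let `v⁰ = Φ` and let `vᵐ`, for `1 ≤ m ≤ 7`, be the infinitesimal rotation of `Φ` in the
`(0, m)`-plane. Writing `Φ_{ijkl} = ⟨γ_{ijkl} ψ, ψ⟩` for the invariant spinor `ψ`, these are, up to
scale, the forms `⟨γ_{ijkl} ψ, ψ_m⟩` for a basis `ψ_m` of the positive spinors, and the Fierz
identity becomes
`Ω_Φ σ = 2 (σ + ∗σ) - 2 ∑ m, ⟨vᵐ, σ⟩ vᵐ`
on 4-forms. The `vᵐ` are self-dual and pairwise orthogonal, with `|v⁰|² = 14` and `|vᵐ|² = 8`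
otherwise, so `⟨vⁿ, Ω_Φ σ⟩ = (4 - 2 |vⁿ|²) ⟨vⁿ, σ⟩` with a nonzero factor. Hence `⟨vⁿ, σ⟩ = 0` for
all `n` if `Ω_Φ σ = 0`; the same holds if `∗σ = -σ`, since `vⁿ` is self-dual. In either case the
identity reduces to `Ω_Φ σ = 2 (σ + ∗σ)`.

The Hodge star exchanges `e_I` and `±e_J` for complementary `I` and `J`, so an anti-self-dual form
is determined by its `35` components with increasing indices starting at `0`, which are arbitrary.
-/

/-! ### Antisymmetric 4-tensors -/

/-- Covariant 4-tensors on an 8-dimensional space, as component arrays. The coefficient ring is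
kept general so that integral tensors can be evaluated. -/
abbrev Tensor4 (R : Type*) := Fin 8 → Fin 8 → Fin 8 → Fin 8 → R

section FourForm

variable {σ τ : Tensor4 ℝ}

theorem FourForm.swap₁₂ (hσ : σ ∈ FourForm) (i j k l : Fin 8) : σ i j k l = -σ j i k l :=
  (hσ i j k l).1

theorem FourForm.swap₂₃ (hσ : σ ∈ FourForm) (i j k l : Fin 8) : σ i j k l = -σ i k j l :=
  (hσ i j k l).2.1

theorem FourForm.swap₃₄ (hσ : σ ∈ FourForm) (i j k l : Fin 8) : σ i j k l = -σ i j l k :=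
  (hσ i j k l).2.2

theorem eq_zero_of_antisymm {u : Fin 8 → Fin 8 → ℝ} (hu : ∀ p q, u p q = -u q p) {p q : Fin 8}
    (hlt : p < q → u p q = 0) (hgt : q < p → u q p = 0) : u p q = 0 := by
  rcases lt_trichotomy p q with h | rfl | h
  · exact hlt h
  · exact self_eq_neg.mp (hu p p)
  · rw [hu, hgt h, neg_zero]

theorem FourForm.eq_zero_of_increasing (hσ : σ ∈ FourForm)
    (h : ∀ i j k l, i < j → j < k → k < l → σ i j k l = 0) : σ = 0 := by
  have swap₁₂ (k l p q : Fin 8) := FourForm.swap₁₂ hσ p q k l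
  have swap₂₃ (i l p q : Fin 8) := FourForm.swap₂₃ hσ i p q l
  have swap₃₄ := FourForm.swap₃₄ hσ
  have insert₄ (i j k l) (hij : i < j) (hjk : j < k) : σ i j k l = 0 :=
    eq_zero_of_antisymm (swap₃₄ i j) (h i j k l hij hjk) fun hlk =>
      eq_zero_of_antisymm (swap₂₃ i k) (fun hjl => h i j l k hij hjl hlk) fun hlj =>
        eq_zero_of_antisymm (swap₁₂ j k) (fun hil => h i l j k hil hlj hjk) fun hli =>
          h l i j k hli hij hjk
  have insert₃ (i j k l) (hij : i < j) : σ i j k l = 0 :=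
    eq_zero_of_antisymm (swap₂₃ i l) (insert₄ i j k l hij) fun hkj =>
      eq_zero_of_antisymm (swap₁₂ j l) (fun hik => insert₄ i k j l hik hkj) fun hki =>
        insert₄ k i j l hki hij
  funext i j k l
  exact eq_zero_of_antisymm (swap₁₂ k l) (insert₃ i j k l) (insert₃ j i k l)

theorem FourForm.ext_increasing (hσ : σ ∈ FourForm) (hτ : τ ∈ FourForm)
    (h : ∀ i j k l, i < j → j < k → k < l → σ i j k l = τ i j k l) : σ = τ :=
  sub_eq_zero.mp <| FourForm.eq_zero_of_increasing (sub_mem hσ hτ) fun i j k l hij hjk hkl =>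
    sub_eq_zero.mpr (h i j k l hij hjk hkl)

end FourForm

/-- The components of `e_a ∧ e_b`, used to compute with `wedge4` by Laplace expansion along a
pair of columns. -/
def wedge2 (a b i j : Fin 8) : ℝ := kd a i * kd b j - kd a j * kd b i

theorem det_fin_four_laplace {R : Type*} [CommRing R] (M : Matrix (Fin 4) (Fin 4) R) :
    M.det =
      (M 0 0 * M 1 1 - M 0 1 * M 1 0) * (M 2 2 * M 3 3 - M 2 3 * M 3 2)
        - (M 0 0 * M 2 1 - M 0 1 * M 2 0) * (M 1 2 * M 3 3 - M 1 3 * M 3 2)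
        + (M 0 0 * M 3 1 - M 0 1 * M 3 0) * (M 1 2 * M 2 3 - M 1 3 * M 2 2)
        + (M 1 0 * M 2 1 - M 1 1 * M 2 0) * (M 0 2 * M 3 3 - M 0 3 * M 3 2)
        - (M 1 0 * M 3 1 - M 1 1 * M 3 0) * (M 0 2 * M 2 3 - M 0 3 * M 2 2)
        + (M 2 0 * M 3 1 - M 2 1 * M 3 0) * (M 0 2 * M 1 3 - M 0 3 * M 1 2) := by
  simp [Matrix.det_succ_row_zero, Fin.sum_univ_succ, Fin.succAbove]
  ring

theorem wedge4_eq_sum_wedge2 (a b c d i j k l : Fin 8) :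
    wedge4 a b c d i j k l =
      wedge2 a b i j * wedge2 c d k l - wedge2 a c i j * wedge2 b d k l
        + wedge2 a d i j * wedge2 b c k l + wedge2 b c i j * wedge2 a d k l
        - wedge2 b d i j * wedge2 a c k l + wedge2 c d i j * wedge2 a b k l :=
  det_fin_four_laplace _

theorem wedge4_mem_fourForm (a b c d : Fin 8) : wedge4 a b c d ∈ FourForm := by
  intro i j k l
  refine ⟨?_, ?_, ?_⟩ <;> simp only [wedge4_eq_sum_wedge2, wedge2] <;> ring

theorem sum_wedge2_mul {u : Fin 8 → Fin 8 → ℝ} (hu : ∀ p q, u p q = -u q p) (a b : Fin 8) :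
    ∑ p, ∑ q, wedge2 a b p q * u p q = 2 * u a b := by
  simp only [wedge2, kd, sub_mul, Finset.sum_sub_distrib, ite_mul, one_mul, zero_mul,
    Finset.sum_ite_irrel, Finset.sum_const_zero, Finset.sum_ite_eq, Finset.mem_univ, if_true,
    mul_ite, mul_one, mul_zero]
  rw [hu b a]
  ring

theorem sum_wedge4_mul {u : Fin 8 → Fin 8 → ℝ} (hu : ∀ p q, u p q = -u q p)
    (a b c d i j : Fin 8) :
    ∑ p, ∑ q, wedge4 a b c d i j p q * u p q =
      2 * (wedge2 a b i j * u c d - wedge2 a c i j * u b d + wedge2 a d i j * u b c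
        + wedge2 b c i j * u a d - wedge2 b d i j * u a c + wedge2 c d i j * u a b) := by
  simp only [wedge4_eq_sum_wedge2, add_mul, sub_mul, Finset.sum_add_distrib,
    Finset.sum_sub_distrib, mul_assoc, ← Finset.mul_sum, sum_wedge2_mul hu]
  ring

theorem sum_wedge4_mul_fourForm {σ : Tensor4 ℝ} (hσ : σ ∈ FourForm) (a b c d : Fin 8) :
    ∑ i, ∑ j, ∑ k, ∑ l, wedge4 a b c d i j k l * σ i j k l = 24 * σ a b c d := by
  have swap₁₂ := FourForm.swap₁₂ hσ
  have swap₂₃ := FourForm.swap₂₃ hσ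
  simp only [sum_wedge4_mul (FourForm.swap₃₄ hσ _ _), ← Finset.mul_sum, Finset.sum_add_distrib,
    Finset.sum_sub_distrib, sum_wedge2_mul fun p q => swap₁₂ p q _ _]
  linear_combination -4 * swap₂₃ a c b d
    + 4 * (swap₂₃ a d b c - FourForm.swap₃₄ hσ a b d c)
    + 4 * (swap₂₃ b c a d - swap₁₂ b a c d)
    - 4 * (swap₂₃ b d a c - swap₁₂ b a d c + FourForm.swap₃₄ hσ a b d c)
    + 4 * (swap₂₃ c d a b - swap₁₂ c a d b + FourForm.swap₃₄ hσ a c d b - swap₂₃ a c b d)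

theorem wedge2_of_lt {a b i j : Fin 8} (hab : a < b) (hij : i < j) :
    wedge2 a b i j = if a = i ∧ b = j then 1 else 0 := by
  have : ¬(a = j ∧ b = i) := by omega
  simp only [wedge2, kd, ite_zero_mul_ite_zero, mul_one, if_neg this, sub_zero]

theorem wedge4_of_increasing {a b c d i j k l : Fin 8} (hab : a < b) (hbc : b < c) (hcd : c < d)
    (hij : i < j) (hjk : j < k) (hkl : k < l) :
    wedge4 a b c d i j k l = if a = i ∧ b = j ∧ c = k ∧ d = l then 1 else 0 := by
  have hac := hab.trans hbc
  have hbd := hbc.trans hcd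
  simp only [wedge4_eq_sum_wedge2, wedge2_of_lt hab, wedge2_of_lt hbc, wedge2_of_lt hcd,
    wedge2_of_lt hac, wedge2_of_lt hbd, wedge2_of_lt (hab.trans hbd), hij, hkl,
    ite_zero_mul_ite_zero, mul_one]
  rw [if_neg (by omega : ¬((a = i ∧ c = j) ∧ b = k ∧ d = l)),
    if_neg (by omega : ¬((a = i ∧ d = j) ∧ b = k ∧ c = l)),
    if_neg (by omega : ¬((b = i ∧ c = j) ∧ a = k ∧ d = l)),
    if_neg (by omega : ¬((b = i ∧ d = j) ∧ a = k ∧ c = l)),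
    if_neg (by omega : ¬((c = i ∧ d = j) ∧ a = k ∧ b = l))]
  simp only [and_assoc, sub_zero, add_zero]

/-! ### Coordinates of 4-forms -/

/-- Quadruples of indices, labelling the components of a 4-tensor. -/
abbrev Quad := Fin 8 × Fin 8 × Fin 8 × Fin 8

/-- The strictly increasing quadruples, which index the standard basis of `Λ⁴ℝ⁸`. -/
def increasing : Finset Quad := {I | I.1 < I.2.1 ∧ I.2.1 < I.2.2.1 ∧ I.2.2.1 < I.2.2.2}

/-- The component `T_I` of a 4-tensor, in uncurried form so that sums over `increasing` can be
written. -/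
def component {R : Type*} (T : Tensor4 R) (I : Quad) : R := T I.1 I.2.1 I.2.2.1 I.2.2.2

/-- The element `e_I` of the standard basis of `Λ⁴ℝ⁸`, for `I` increasing. -/
def basisForm (I : Quad) : Tensor4 ℝ := wedge4 I.1 I.2.1 I.2.2.1 I.2.2.2

theorem mem_increasing {i j k l : Fin 8} : (i, j, k, l) ∈ increasing ↔ i < j ∧ j < k ∧ k < l := by
  simp only [increasing, Finset.mem_filter, Finset.mem_univ, true_and]

theorem basisForm_mem_fourForm (I : Quad) : basisForm I ∈ FourForm :=
  wedge4_mem_fourForm _ _ _ _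

theorem component_basisForm {I J : Quad} (hI : I ∈ increasing) (hJ : J ∈ increasing) :
    component (basisForm I) J = if I = J then 1 else 0 := by
  obtain ⟨a, b, c, d⟩ := I
  obtain ⟨i, j, k, l⟩ := J
  obtain ⟨hab, hbc, hcd⟩ := mem_increasing.mp hI
  obtain ⟨hij, hjk, hkl⟩ := mem_increasing.mp hJ
  simp only [component, basisForm, wedge4_of_increasing hab hbc hcd hij hjk hkl, Prod.mk.injEq]

theorem FourForm.ext_component {σ τ : Tensor4 ℝ} (hσ : σ ∈ FourForm) (hτ : τ ∈ FourForm)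
    (h : ∀ I ∈ increasing, component σ I = component τ I) : σ = τ :=
  FourForm.ext_increasing hσ hτ fun i j k l hij hjk hkl =>
    h (i, j, k, l) (mem_increasing.mpr ⟨hij, hjk, hkl⟩)

theorem component_sum_smul_basisForm (f : Quad → ℝ) {J : Quad} (hJ : J ∈ increasing) :
    component (∑ I ∈ increasing, f I • basisForm I) J = f J := by
  have expand : component (∑ I ∈ increasing, f I • basisForm I) J
      = ∑ I ∈ increasing, f I * component (basisForm I) J := by
    simp only [component, Finset.sum_apply, Pi.smul_apply, smul_eq_mul]
  rw [expand, Finset.sum_eq_single_of_mem J hJ]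
  · rw [component_basisForm hJ hJ, if_pos rfl, mul_one]
  · intro I hI hIJ
    rw [component_basisForm hI hJ, if_neg hIJ, mul_zero]

theorem sum_smul_basisForm_mem_fourForm (f : Quad → ℝ) :
    ∑ I ∈ increasing, f I • basisForm I ∈ FourForm :=
  sum_mem fun I _ => FourForm.smul_mem _ (basisForm_mem_fourForm I)

theorem FourForm.eq_sum_basisForm {σ : Tensor4 ℝ} (hσ : σ ∈ FourForm) :
    σ = ∑ I ∈ increasing, component σ I • basisForm I :=
  FourForm.ext_component hσ (sum_smul_basisForm_mem_fourForm _) fun _ hJ =>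
    (component_sum_smul_basisForm _ hJ).symm

/-- The inner product of 4-forms for which the `e_I` with `I` increasing are orthonormal, extended
to a bilinear form on all 4-tensors. -/
def formInner : LinearMap.BilinForm ℝ (Tensor4 ℝ) :=
  LinearMap.mk₂ ℝ (fun σ τ => ∑ I ∈ increasing, component σ I * component τ I)
    (fun _ _ _ => by simp only [component, Pi.add_apply, add_mul, Finset.sum_add_distrib])
    (fun _ _ _ => by
      simp only [component, Pi.smul_apply, smul_eq_mul, mul_assoc, Finset.mul_sum])
    (fun _ _ _ => by simp only [component, Pi.add_apply, mul_add, Finset.sum_add_distrib])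
    (fun _ _ _ => by
      simp only [component, Pi.smul_apply, smul_eq_mul, mul_left_comm, Finset.mul_sum])

theorem formInner_apply (σ τ : Tensor4 ℝ) :
    formInner σ τ = ∑ I ∈ increasing, component σ I * component τ I :=
  rfl

theorem sum_mul_eq_formInner {σ τ : Tensor4 ℝ} (hσ : σ ∈ FourForm) (hτ : τ ∈ FourForm) :
    ∑ i, ∑ j, ∑ k, ∑ l, σ i j k l * τ i j k l = 24 * formInner σ τ := by
  conv_lhs => rw [FourForm.eq_sum_basisForm hσ]
  simp only [Finset.sum_apply, Pi.smul_apply, smul_eq_mul, Finset.sum_mul, mul_assoc,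
    Finset.sum_comm (t := increasing), ← Finset.mul_sum]
  simp only [basisForm, sum_wedge4_mul_fourForm hτ, formInner_apply, component, Finset.mul_sum,
    mul_left_comm]

/-- The sign of `b - a`, the factor contributed to the Levi-Civita symbol by a pair of entries. -/
def orderSign (a b : Fin 8) : ℤ := if a < b then 1 else if b < a then -1 else 0

theorem orderSign_swap (a b : Fin 8) : orderSign a b = -orderSign b a := by
  revert a b
  decide

theorem eps8_eq_prod_orderSign (f : Fin 8 → Fin 8) :
    eps8 f = ((∏ i, ∏ j ∈ Finset.Ioi i, orderSign (f i) (f j) : ℤ) : ℝ) := by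
  unfold eps8
  split_ifs with hf
  · rw [Equiv.Perm.sign_eq_prod_prod_Ioi]
    push_cast
    refine Finset.prod_congr rfl fun i _ => Finset.prod_congr rfl fun j hj => ?_
    have hne : f i ≠ f j := hf.1.ne (Finset.mem_Ioi.mp hj).ne
    simp only [Equiv.ofBijective_apply, orderSign]
    rcases hne.lt_or_gt with h | h <;> simp [h, h.not_gt]
  · obtain ⟨i, j, hij, hne⟩ : ∃ i j, f i = f j ∧ i < j := by
      have hinj : ¬Function.Injective f := fun h => hf (Finite.injective_iff_bijective.mp h)
      obtain ⟨i, j, heq, hne⟩ := Function.not_injective_iff.mp hinj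
      rcases hne.lt_or_gt with h | h
      · exact ⟨i, j, heq, h⟩
      · exact ⟨j, i, heq.symm, h⟩
    rw [Finset.prod_eq_zero (Finset.mem_univ i), Int.cast_zero]
    exact Finset.prod_eq_zero (Finset.mem_Ioi.mpr hne) (by simp [orderSign, hij])

/-- The Levi-Civita symbol on eight indices with values in `ℤ`, as a product over pairs of entries;
unlike `eps8` it can be evaluated. -/
def leviCivita (a b c d e f g h : Fin 8) : ℤ :=
  orderSign a b * orderSign a c * orderSign a d * orderSign a e * orderSign a f * orderSign a g *
    orderSign a h *
  (orderSign b c * orderSign b d * orderSign b e * orderSign b f * orderSign b g * orderSign b h) *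
  (orderSign c d * orderSign c e * orderSign c f * orderSign c g * orderSign c h) *
  (orderSign d e * orderSign d f * orderSign d g * orderSign d h) *
  (orderSign e f * orderSign e g * orderSign e h) * (orderSign f g * orderSign f h) *
  orderSign g h

theorem eps8_eq_leviCivita (a b c d e f g h : Fin 8) :
    eps8 ![a, b, c, d, e, f, g, h] = leviCivita a b c d e f g h := by
  have Ioi_eq : ∀ i : Fin 8, Finset.Ioi i = Finset.univ.filter (i < ·) := by decide
  rw [eps8_eq_prod_orderSign]
  simp only [Ioi_eq, Finset.prod_filter, Fin.prod_univ_eight]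
  simp [-mul_eq_mul_right_iff, -mul_eq_mul_left_iff, leviCivita, mul_assoc]

theorem leviCivita_left_mem_fourForm (e f g h : Fin 8) :
    (fun a b c d => (leviCivita a b c d e f g h : ℝ)) ∈ FourForm := by
  refine fun i j k l => ⟨?_, ?_, ?_⟩
  · simp only [leviCivita, orderSign_swap j i]
    push_cast
    ring
  · simp only [leviCivita, orderSign_swap k j]
    push_cast
    ring
  · simp only [leviCivita, orderSign_swap l k]
    push_cast
    ring

theorem leviCivita_comm (a b c d i j k l : Fin 8) :
    leviCivita a b c d i j k l = leviCivita i j k l a b c d := by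
  simp only [leviCivita,
    orderSign_swap i a, orderSign_swap i b, orderSign_swap i c, orderSign_swap i d,
    orderSign_swap j a, orderSign_swap j b, orderSign_swap j c, orderSign_swap j d,
    orderSign_swap k a, orderSign_swap k b, orderSign_swap k c, orderSign_swap k d,
    orderSign_swap l a, orderSign_swap l b, orderSign_swap l c, orderSign_swap l d]
  ring

theorem leviCivita_right_mem_fourForm (a b c d : Fin 8) :
    (fun i j k l => (leviCivita a b c d i j k l : ℝ)) ∈ FourForm := by
  simpa only [leviCivita_comm a b c d] using leviCivita_left_mem_fourForm a b c d

/-! ### The Hodge star -/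

theorem eps8_mem_fourForm (a b c d : Fin 8) :
    (fun i j k l => eps8 ![a, b, c, d, i, j, k, l]) ∈ FourForm := by
  simpa only [eps8_eq_leviCivita] using leviCivita_right_mem_fourForm a b c d

/-- The Hodge star `∗` on 4-forms of `ℝ⁸`, extended by the same formula to all 4-tensors. -/
def hodgeStar : Tensor4 ℝ →ₗ[ℝ] Tensor4 ℝ where
  toFun σ := fun i j k l =>
    1 / 24 * ∑ a, ∑ b, ∑ c, ∑ d, eps8 ![i, j, k, l, a, b, c, d] * σ a b c d
  map_add' σ τ := by
    funext i j k l
    simp only [Pi.add_apply, mul_add, Finset.sum_add_distrib]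
  map_smul' c σ := by
    funext i j k l
    simp only [Pi.smul_apply, smul_eq_mul, mul_left_comm _ c, ← Finset.mul_sum, RingHom.id_apply]

theorem hodgeStar_apply (σ : Tensor4 ℝ) (i j k l : Fin 8) :
    hodgeStar σ i j k l =
      1 / 24 * ∑ a, ∑ b, ∑ c, ∑ d, eps8 ![i, j, k, l, a, b, c, d] * σ a b c d :=
  rfl

theorem hodgeStar_mem_fourForm (σ : Tensor4 ℝ) : hodgeStar σ ∈ FourForm := by
  have expand : hodgeStar σ = ∑ a, ∑ b, ∑ c, ∑ d, (1 / 24 * σ a b c d) •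
      fun i j k l => (leviCivita i j k l a b c d : ℝ) := by
    funext i j k l
    simp only [hodgeStar_apply, eps8_eq_leviCivita, Finset.sum_apply, Pi.smul_apply, smul_eq_mul,
      Finset.mul_sum, mul_assoc, mul_comm (σ _ _ _ _)]
  rw [expand]
  exact sum_mem fun a _ => sum_mem fun b _ => sum_mem fun c _ => sum_mem fun d _ =>
    FourForm.smul_mem _ (leviCivita_left_mem_fourForm a b c d)

/-- The matrix entry `ε_{IJ}` of the Hodge star in the standard basis. -/
def leviCivitaPair (I J : Quad) : ℤ := component (component leviCivita I) J

theorem leviCivitaPair_comm (I J : Quad) : leviCivitaPair I J = leviCivitaPair J I :=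
  leviCivita_comm ..

theorem component_hodgeStar {σ : Tensor4 ℝ} (hσ : σ ∈ FourForm) (I : Quad) :
    component (hodgeStar σ) I = ∑ J ∈ increasing, leviCivitaPair I J * component σ J := by
  obtain ⟨i, j, k, l⟩ := I
  have h := sum_mul_eq_formInner (eps8_mem_fourForm i j k l) hσ
  simp only [formInner_apply, component, eps8_eq_leviCivita] at h
  simp only [component, hodgeStar_apply, eps8_eq_leviCivita, h, leviCivitaPair]
  ring

theorem formInner_hodgeStar_comm {σ τ : Tensor4 ℝ} (hσ : σ ∈ FourForm) (hτ : τ ∈ FourForm) :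
    formInner (hodgeStar σ) τ = formInner σ (hodgeStar τ) := by
  simp only [formInner_apply, component_hodgeStar hσ, component_hodgeStar hτ,
    Finset.sum_mul, Finset.mul_sum]
  rw [Finset.sum_comm]
  refine Finset.sum_congr rfl fun I _ => Finset.sum_congr rfl fun J _ => ?_
  rw [leviCivitaPair_comm I J]
  ring

/- The default instance builds the elements of `Fin 8` by counting. With numerals the index tuples
occurring in a large check are syntactically equal terms, which the kernel evaluates only once. -/
local instance decidableForallFinEight (P : Fin 8 → Prop) [DecidablePred P] :
    Decidable (∀ i, P i) :=
  decidable_of_iff (P 0 ∧ P 1 ∧ P 2 ∧ P 3 ∧ P 4 ∧ P 5 ∧ P 6 ∧ P 7) (by simp [Fin.forall_fin_succ])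

/-- `P` holds at all increasing quadruples. The nested bounds let the evaluation of a decidable `P`
skip the other quadruples early. -/
def ForallIncreasing (P : Fin 8 → Fin 8 → Fin 8 → Fin 8 → Prop) : Prop :=
  ∀ i j, i < j → ∀ k, j < k → ∀ l, k < l → P i j k l

instance decidableForallIncreasing (P : Fin 8 → Fin 8 → Fin 8 → Fin 8 → Prop)
    [∀ i j k l, Decidable (P i j k l)] : Decidable (ForallIncreasing P) := by
  unfold ForallIncreasing
  infer_instance

theorem forallIncreasing_iff {P : Fin 8 → Fin 8 → Fin 8 → Fin 8 → Prop} :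
    ForallIncreasing P ↔ ∀ I ∈ increasing, P I.1 I.2.1 I.2.2.1 I.2.2.2 := by
  simp only [ForallIncreasing, Prod.forall, mem_increasing]
  exact ⟨fun h i j k l hI => h i j hI.1 k hI.2.1 l hI.2.2,
    fun h i j hij k hjk l hkl => h i j k l ⟨hij, hjk, hkl⟩⟩

theorem forallIncreasing_leviCivita : ForallIncreasing fun a b c d =>
    (¬ForallIncreasing fun i j k l => leviCivita a b c d i j k l = 0) ∧
    ForallIncreasing fun i j k l => leviCivita a b c d i j k l ≠ 0 →
      leviCivita a b c d i j k l * leviCivita a b c d i j k l = 1 ∧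
      ForallIncreasing fun p q r s => leviCivita a b c d p q r s ≠ 0 →
        p = i ∧ q = j ∧ r = k ∧ s = l := by
  decide +kernel

theorem exists_leviCivitaPair_ne_zero {I : Quad} (hI : I ∈ increasing) :
    ∃ J ∈ increasing, leviCivitaPair I J ≠ 0 := by
  have h := (forallIncreasing_iff.mp forallIncreasing_leviCivita I hI).1
  rw [forallIncreasing_iff] at h
  push Not at h
  exact h

section

variable {I J : Quad}

theorem leviCivitaPair_mul_self (hI : I ∈ increasing) (hJ : J ∈ increasing)
    (hIJ : leviCivitaPair I J ≠ 0) :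
    (leviCivitaPair I J * leviCivitaPair I J : ℝ) = 1 := by
  have h := forallIncreasing_iff.mp
    (forallIncreasing_iff.mp forallIncreasing_leviCivita I hI).2 J hJ
  exact_mod_cast (h hIJ).1

theorem leviCivitaPair_eq_zero_of_ne (hI : I ∈ increasing) (hJ : J ∈ increasing)
    (hIJ : leviCivitaPair I J ≠ 0) {K : Quad} (hK : K ∈ increasing) (hKJ : K ≠ J) :
    leviCivitaPair I K = 0 := by
  have h := forallIncreasing_iff.mp
    (forallIncreasing_iff.mp forallIncreasing_leviCivita I hI).2 J hJ
  by_contra hIK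
  obtain ⟨h₁, h₂, h₃, h₄⟩ := forallIncreasing_iff.mp (h hIJ).2 K hK hIK
  exact hKJ (Prod.ext h₁ (Prod.ext h₂ (Prod.ext h₃ h₄)))

theorem component_hodgeStar_of_ne_zero (hI : I ∈ increasing) (hJ : J ∈ increasing)
    (hIJ : leviCivitaPair I J ≠ 0) {σ : Tensor4 ℝ} (hσ : σ ∈ FourForm) :
    component (hodgeStar σ) I = leviCivitaPair I J * component σ J := by
  rw [component_hodgeStar hσ, Finset.sum_eq_single_of_mem J hJ]
  intro K hK hKJ
  rw [leviCivitaPair_eq_zero_of_ne hI hJ hIJ hK hKJ, Int.cast_zero, zero_mul]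

end

theorem hodgeStar_hodgeStar {σ : Tensor4 ℝ} (hσ : σ ∈ FourForm) :
    hodgeStar (hodgeStar σ) = σ := by
  refine FourForm.ext_component (hodgeStar_mem_fourForm _) hσ fun I hI => ?_
  obtain ⟨J, hJ, hIJ⟩ := exists_leviCivitaPair_ne_zero hI
  rw [component_hodgeStar_of_ne_zero hI hJ hIJ (hodgeStar_mem_fourForm σ),
    component_hodgeStar_of_ne_zero hJ hI (leviCivitaPair_comm I J ▸ hIJ) hσ,
    leviCivitaPair_comm J I, ← mul_assoc, leviCivitaPair_mul_self hI hJ hIJ, one_mul]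

/-! ### Evaluation over the integers -/

/-- Half the contraction `∑ p, ∑ q, (e_a ∧ e_b ∧ e_c ∧ e_d)_{ijpq} u_{pq}`, for `a < b < c < d` and
`u` antisymmetric, as a case distinction that is cheap to evaluate. -/
def contractPair {R : Type*} [Ring R] (u : Fin 8 → Fin 8 → R) (a b c d i j : Fin 8) : R :=
  if a = i then contractOne b c d
  else if b = i then -contractOne a c d
  else if c = i then contractOne a b d
  else if d = i then -contractOne a b c
  else 0
where
  contractOne (x y z : Fin 8) : R :=
    if x = j then u y z else if y = j then -u x z else if z = j then u x y else 0

/-- The form `e_a ∧ e_b ∧ e_c ∧ e_d` with integer components, for `a < b < c < d`. -/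
def wedgeInt (a b c d i j k l : Fin 8) : ℤ :=
  contractPair (fun p q => (if p = k then if q = l then 1 else 0 else 0) -
    (if p = l then if q = k then 1 else 0 else 0)) a b c d i j

/-- The form `Φ` with integer components. -/
def phiInt (i j k l : Fin 8) : ℤ :=
    -wedgeInt 0 1 2 7 i j k l + wedgeInt 0 2 3 6 i j k l - wedgeInt 0 3 4 7 i j k l
  - wedgeInt 0 5 6 7 i j k l + wedgeInt 0 1 4 6 i j k l + wedgeInt 0 2 4 5 i j k l
  - wedgeInt 0 1 3 5 i j k l - wedgeInt 3 4 5 6 i j k l - wedgeInt 1 4 5 7 i j k l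
  - wedgeInt 1 2 5 6 i j k l - wedgeInt 1 2 3 4 i j k l - wedgeInt 2 3 5 7 i j k l
  - wedgeInt 1 3 6 7 i j k l + wedgeInt 2 4 6 7 i j k l

/-- The infinitesimal rotation in the `(a, b)`-plane, acting on 4-tensors as a derivation. -/
def planeRotation {R : Type*} [Ring R] (a b : Fin 8) (T : Tensor4 R) : Tensor4 R := fun i j k l =>
  (if i = a then T b j k l else 0) - (if i = b then T a j k l else 0)
    + (if j = a then T i b k l else 0) - (if j = b then T i a k l else 0)
    + (if k = a then T i j b l else 0) - (if k = b then T i j a l else 0)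
    + (if l = a then T i j k b else 0) - (if l = b then T i j k a else 0)

/-- For `T = Φ`, the 4-form `vᵐ`: `v⁰ = Φ` and `vᵐ` is the infinitesimal rotation of `Φ` in the
`(0, m)`-plane. These eight forms are an orthogonal basis of `Λ⁴₁ ⊕ Λ⁴₇`, the image of the positive
spinors. -/
def spinorForm {R : Type*} [Ring R] (T : Tensor4 R) (m : Fin 8) : Tensor4 R :=
  if m = 0 then T else planeRotation 0 m T

/-- Half the components of `Ω_Φ (e_a ∧ e_b ∧ e_c ∧ e_d)`, for `a < b < c < d`, in integers. -/
def omegaInt (a b c d i j k l : Fin 8) : ℤ :=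
  contractPair (fun p q => phiInt p q k l) a b c d i j
    + contractPair (fun p q => phiInt p q l j) a b c d i k
    + contractPair (fun p q => phiInt p q j k) a b c d i l
    + contractPair (fun p q => phiInt p q i l) a b c d j k
    + contractPair (fun p q => phiInt p q k i) a b c d j l
    + contractPair (fun p q => phiInt p q i j) a b c d k l

/-- `∑ i, f i`, written out so that the kernel can evaluate it. -/
def sumFinEight (f : Fin 8 → ℤ) : ℤ := f 0 + f 1 + f 2 + f 3 + f 4 + f 5 + f 6 + f 7

/-- The sum of `f` over the increasing quadruples, in a form that the kernel can evaluate. -/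
def sumIncreasing (f : Tensor4 ℤ) : ℤ :=
  sumFinEight fun i => sumFinEight fun j => if i < j then
    sumFinEight fun k => if j < k then
      sumFinEight fun l => if k < l then f i j k l else 0
    else 0 else 0

theorem sumIncreasing_spinorForm_mul (m n : Fin 8) :
    sumIncreasing (fun i j k l => spinorForm phiInt m i j k l * spinorForm phiInt n i j k l) =
      if m = n then if m = 0 then 14 else 8 else 0 := by
  revert m n
  decide +kernel

theorem forallIncreasing_spinorForm_selfDual :
    ForallIncreasing fun a b c d => ForallIncreasing fun i j k l =>
      leviCivita a b c d i j k l ≠ 0 → ∀ m, spinorForm phiInt m a b c d =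
        leviCivita a b c d i j k l * spinorForm phiInt m i j k l := by
  decide +kernel

theorem forallIncreasing_omegaInt_fierz :
    ForallIncreasing fun a b c d => ForallIncreasing fun i j k l =>
      omegaInt a b c d i j k l = (if a = i ∧ b = j ∧ c = k ∧ d = l then 1 else 0)
        + leviCivita i j k l a b c d
        - sumFinEight fun m => spinorForm phiInt m a b c d * spinorForm phiInt m i j k l := by
  decide +kernel

theorem contractPair_eq_wedge2 (u : Fin 8 → Fin 8 → ℝ) {a b c d : Fin 8} (hab : a < b)
    (hbc : b < c) (hcd : c < d) (i j : Fin 8) :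
    contractPair u a b c d i j =
      wedge2 a b i j * u c d - wedge2 a c i j * u b d + wedge2 a d i j * u b c
        + wedge2 b c i j * u a d - wedge2 b d i j * u a c + wedge2 c d i j * u a b := by
  have hac := hab.trans hbc
  have hbd := hbc.trans hcd
  have had := hab.trans hbd
  simp only [contractPair, contractPair.contractOne, wedge2, kd]
  split_ifs <;> first | (exfalso; omega) | ring

theorem cast_contractPair (u : Fin 8 → Fin 8 → ℤ) (a b c d i j : Fin 8) :
    ((contractPair u a b c d i j : ℤ) : ℝ) = contractPair (fun p q => (u p q : ℝ)) a b c d i j := by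
  simp only [contractPair, contractPair.contractOne]
  push_cast
  rfl

theorem cast_wedgeInt {a b c d : Fin 8} (hab : a < b) (hbc : b < c) (hcd : c < d)
    (i j k l : Fin 8) : (wedgeInt a b c d i j k l : ℝ) = wedge4 a b c d i j k l := by
  rw [wedgeInt, cast_contractPair, contractPair_eq_wedge2 _ hab hbc hcd, wedge4_eq_sum_wedge2]
  simp only [wedge2, kd, Int.cast_sub, Int.cast_ite, Int.cast_one, Int.cast_zero, ite_mul,
    one_mul, zero_mul]

theorem cast_phiInt (i j k l : Fin 8) : (phiInt i j k l : ℝ) = Phi i j k l := by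
  simp only [phiInt, Int.cast_add, Int.cast_sub, Int.cast_neg]
  simp (disch := decide) only [cast_wedgeInt, Phi]

theorem cast_spinorForm (m i j k l : Fin 8) :
    ((spinorForm phiInt m i j k l : ℤ) : ℝ) = spinorForm Phi m i j k l := by
  simp only [spinorForm]
  split_ifs
  · exact cast_phiInt i j k l
  · simp only [planeRotation]
    push_cast
    simp only [cast_phiInt]

theorem phi_mem_fourForm : Phi ∈ FourForm := by
  have mem := wedge4_mem_fourForm
  intro i j k l
  refine ⟨?_, ?_, ?_⟩
  · simp only [Phi, fun a b c d => FourForm.swap₁₂ (mem a b c d) i j k l]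
    ring
  · simp only [Phi, fun a b c d => FourForm.swap₂₃ (mem a b c d) i j k l]
    ring
  · simp only [Phi, fun a b c d => FourForm.swap₃₄ (mem a b c d) i j k l]
    ring

theorem planeRotation_mem_fourForm {T : Tensor4 ℝ} (hT : T ∈ FourForm) (a b : Fin 8) :
    planeRotation a b T ∈ FourForm := by
  have ite_eq (i a : Fin 8) (x : ℝ) : (if i = a then x else 0) = kd i a * x := by
    rw [kd, ite_mul, one_mul, zero_mul]
  have swap₁₂ := FourForm.swap₁₂ hT
  have swap₂₃ := FourForm.swap₂₃ hT
  have swap₃₄ := FourForm.swap₃₄ hT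
  refine fun i j k l => ⟨?_, ?_, ?_⟩ <;> simp only [planeRotation, ite_eq]
  · linear_combination kd i a * swap₁₂ b j k l - kd i b * swap₁₂ a j k l
      + kd j a * swap₁₂ i b k l - kd j b * swap₁₂ i a k l
      + kd k a * swap₁₂ i j b l - kd k b * swap₁₂ i j a l
      + kd l a * swap₁₂ i j k b - kd l b * swap₁₂ i j k a
  · linear_combination kd i a * swap₂₃ b j k l - kd i b * swap₂₃ a j k l
      + kd j a * swap₂₃ i b k l - kd j b * swap₂₃ i a k l
      + kd k a * swap₂₃ i j b l - kd k b * swap₂₃ i j a l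
      + kd l a * swap₂₃ i j k b - kd l b * swap₂₃ i j k a
  · linear_combination kd i a * swap₃₄ b j k l - kd i b * swap₃₄ a j k l
      + kd j a * swap₃₄ i b k l - kd j b * swap₃₄ i a k l
      + kd k a * swap₃₄ i j b l - kd k b * swap₃₄ i j a l
      + kd l a * swap₃₄ i j k b - kd l b * swap₃₄ i j k a

theorem spinorForm_mem_fourForm (m : Fin 8) : spinorForm Phi m ∈ FourForm := by
  unfold spinorForm
  split_ifs
  · exact phi_mem_fourForm
  · exact planeRotation_mem_fourForm phi_mem_fourForm 0 m

theorem omegaOp_apply (σ : Tensor4 ℝ) (i j k l : Fin 8) :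
    OmegaOp σ i j k l =
      (∑ p, ∑ q, σ i j p q * Phi p q k l) + (∑ p, ∑ q, σ i k p q * Phi p q l j)
      + (∑ p, ∑ q, σ i l p q * Phi p q j k) + (∑ p, ∑ q, σ j k p q * Phi p q i l)
      + (∑ p, ∑ q, σ j l p q * Phi p q k i) + (∑ p, ∑ q, σ k l p q * Phi p q i j) :=
  rfl

theorem omegaOp_mem_fourForm {σ : Tensor4 ℝ} (hσ : σ ∈ FourForm) : OmegaOp σ ∈ FourForm := by
  have swap_left (i j k l) :
      ∑ p, ∑ q, σ i j p q * Phi p q k l = -∑ p, ∑ q, σ j i p q * Phi p q k l := by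
    simp only [← Finset.sum_neg_distrib, ← neg_mul, ← FourForm.swap₁₂ hσ]
  have swap_right (i j k l) :
      ∑ p, ∑ q, σ i j p q * Phi p q k l = -∑ p, ∑ q, σ i j p q * Phi p q l k := by
    simp only [← Finset.sum_neg_distrib, ← mul_neg, ← FourForm.swap₃₄ phi_mem_fourForm]
  refine fun i j k l => ⟨?_, ?_, ?_⟩ <;> simp only [omegaOp_apply]
  · linear_combination swap_left i j k l + swap_right i k l j + swap_right i l j k
      + swap_right j k i l + swap_right j l k i + swap_right k l i j
  · linear_combination swap_right i j k l + swap_right i k l j + swap_right i l j k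
      + swap_left j k i l + swap_right j l k i + swap_right k l i j
  · linear_combination swap_right i j k l + swap_right i k l j + swap_right i l j k
      + swap_right j k i l + swap_right j l k i + swap_left k l i j

theorem omegaOp_wedge4 {a b c d : Fin 8} (hab : a < b) (hbc : b < c) (hcd : c < d)
    (i j k l : Fin 8) : OmegaOp (wedge4 a b c d) i j k l = 2 * omegaInt a b c d i j k l := by
  have contract (i j k l) : ∑ p, ∑ q, wedge4 a b c d i j p q * Phi p q k l =
      2 * (contractPair (fun p q => phiInt p q k l) a b c d i j : ℤ) := by
    rw [sum_wedge4_mul fun p q => FourForm.swap₁₂ phi_mem_fourForm p q k l, cast_contractPair,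
      contractPair_eq_wedge2 _ hab hbc hcd]
    simp only [cast_phiInt]
  simp only [omegaOp_apply, contract, omegaInt]
  push_cast
  ring

/-! ### The Fierz identity -/

theorem sumFinEight_eq_sum (f : Fin 8 → ℤ) : sumFinEight f = ∑ i, f i :=
  (Fin.sum_univ_eight f).symm

theorem sumIncreasing_eq_sum (f : Tensor4 ℤ) :
    sumIncreasing f = ∑ I ∈ increasing, component f I := by
  simp only [sumIncreasing, sumFinEight_eq_sum, increasing, Finset.sum_filter,
    Fintype.sum_prod_type, component, ite_and, Finset.sum_ite_irrel, Finset.sum_const_zero]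

theorem component_spinorForm (m : Fin 8) (I : Quad) :
    component (spinorForm Phi m) I = (component (spinorForm phiInt m) I : ℤ) :=
  (cast_spinorForm ..).symm

theorem formInner_spinorForm (m n : Fin 8) :
    formInner (spinorForm Phi m) (spinorForm Phi n) =
      if m = n then if m = 0 then 14 else 8 else 0 := by
  have h := sumIncreasing_spinorForm_mul m n
  rw [sumIncreasing_eq_sum] at h
  simp only [formInner_apply, component_spinorForm]
  exact_mod_cast h

theorem hodgeStar_spinorForm (m : Fin 8) : hodgeStar (spinorForm Phi m) = spinorForm Phi m := by
  refine FourForm.ext_component (hodgeStar_mem_fourForm _) (spinorForm_mem_fourForm m)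
    fun I hI => ?_
  obtain ⟨J, hJ, hIJ⟩ := exists_leviCivitaPair_ne_zero hI
  rw [component_hodgeStar_of_ne_zero hI hJ hIJ (spinorForm_mem_fourForm m), component_spinorForm,
    component_spinorForm]
  have h := forallIncreasing_iff.mp forallIncreasing_spinorForm_selfDual I hI
  exact_mod_cast (forallIncreasing_iff.mp h J hJ hIJ m).symm

theorem component_omegaOp_basisForm {I J : Quad} (hI : I ∈ increasing) (hJ : J ∈ increasing) :
    component (OmegaOp (basisForm I)) J =
      2 * ((if I = J then 1 else 0) + leviCivitaPair J I
        - ∑ m, component (spinorForm Phi m) I * component (spinorForm Phi m) J) := by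
  have key := forallIncreasing_iff.mp
    (forallIncreasing_iff.mp forallIncreasing_omegaInt_fierz I hI) J hJ
  obtain ⟨a, b, c, d⟩ := I
  obtain ⟨i, j, k, l⟩ := J
  obtain ⟨hab, hbc, hcd⟩ := mem_increasing.mp hI
  simp only [component_spinorForm]
  simp only [component, basisForm, omegaOp_wedge4 hab hbc hcd, key, sumFinEight_eq_sum,
    Prod.mk.injEq, leviCivitaPair]
  push_cast
  rfl

theorem omegaOp_eq_fierz {σ : Tensor4 ℝ} (hσ : σ ∈ FourForm) :
    OmegaOp σ = (2 : ℝ) • (σ + hodgeStar σ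
      - ∑ m, formInner (spinorForm Phi m) σ • spinorForm Phi m) := by
  have rhs_mem : σ + hodgeStar σ - ∑ m, formInner (spinorForm Phi m) σ • spinorForm Phi m ∈
      FourForm :=
    sub_mem (add_mem hσ (hodgeStar_mem_fourForm σ)) <|
      sum_mem fun m _ => FourForm.smul_mem _ (spinorForm_mem_fourForm m)
  refine FourForm.ext_component (omegaOp_mem_fourForm hσ) (FourForm.smul_mem _ rhs_mem)
    fun J hJ => ?_
  have lhs : component (OmegaOp σ) J =
      ∑ I ∈ increasing, component σ I * component (OmegaOp (basisForm I)) J := by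
    conv_lhs => rw [FourForm.eq_sum_basisForm hσ, map_sum]
    simp only [map_smul, component, Finset.sum_apply, Pi.smul_apply, smul_eq_mul]
  have rhs : component ((2 : ℝ) • (σ + hodgeStar σ
      - ∑ m, formInner (spinorForm Phi m) σ • spinorForm Phi m)) J =
      2 * (component σ J + component (hodgeStar σ) J
        - ∑ m, formInner (spinorForm Phi m) σ * component (spinorForm Phi m) J) := by
    simp only [component, Pi.smul_apply, Pi.sub_apply, Pi.add_apply, Finset.sum_apply, smul_eq_mul]
  have delta : component σ J = ∑ I ∈ increasing, component σ I * if I = J then 1 else 0 := by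
    simp only [mul_ite, mul_one, mul_zero, Finset.sum_ite_eq', hJ, if_true]
  have fierz : ∑ m, formInner (spinorForm Phi m) σ * component (spinorForm Phi m) J =
      ∑ I ∈ increasing, component σ I *
        ∑ m, component (spinorForm Phi m) I * component (spinorForm Phi m) J := by
    simp only [formInner_apply, Finset.sum_mul, Finset.mul_sum]
    rw [Finset.sum_comm]
    exact Finset.sum_congr rfl fun I _ => Finset.sum_congr rfl fun m _ => by ring
  rw [lhs, rhs, component_hodgeStar hσ, fierz, delta, ← Finset.sum_add_distrib,
    ← Finset.sum_sub_distrib, Finset.mul_sum]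
  refine Finset.sum_congr rfl fun I hI => ?_
  rw [component_omegaOp_basisForm hI hJ]
  ring

/-! ### Anti-self-dual forms -/

theorem formInner_hodgeStar_spinorForm {σ : Tensor4 ℝ} (hσ : σ ∈ FourForm) (n : Fin 8) :
    formInner (spinorForm Phi n) (hodgeStar σ) = formInner (spinorForm Phi n) σ := by
  rw [← formInner_hodgeStar_comm (spinorForm_mem_fourForm n) hσ, hodgeStar_spinorForm]

theorem formInner_omegaOp {σ : Tensor4 ℝ} (hσ : σ ∈ FourForm) (n : Fin 8) :
    formInner (spinorForm Phi n) (OmegaOp σ) =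
      (if n = 0 then -24 else -12) * formInner (spinorForm Phi n) σ := by
  simp only [omegaOp_eq_fierz hσ, map_smul, map_sub, map_add, map_sum, formInner_spinorForm,
    formInner_hodgeStar_spinorForm hσ, smul_eq_mul, mul_ite, mul_zero, Finset.sum_ite_eq,
    Finset.mem_univ, if_true]
  split_ifs <;> ring

theorem omegaOp_eq_zero_iff {σ : Tensor4 ℝ} (hσ : σ ∈ FourForm) :
    OmegaOp σ = 0 ↔ σ = -hodgeStar σ := by
  suffices h : OmegaOp σ = 0 ∨ σ = -hodgeStar σ → ∀ n, formInner (spinorForm Phi n) σ = 0 by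
    have reduced (h₀ : ∀ n, formInner (spinorForm Phi n) σ = 0) :
        OmegaOp σ = 0 ↔ σ = -hodgeStar σ := by
      simp only [omegaOp_eq_fierz hσ, h₀, zero_smul, Finset.sum_const_zero, sub_zero, smul_eq_zero,
        two_ne_zero, false_or, eq_neg_iff_add_eq_zero]
    exact ⟨fun hΩ => (reduced (h (.inl hΩ))).mp hΩ, fun hs => (reduced (h (.inr hs))).mpr hs⟩
  rintro (hΩ | hs) n
  · have eigen := formInner_omegaOp hσ n
    rw [hΩ, map_zero] at eigen
    refine (mul_eq_zero.mp eigen.symm).resolve_left ?_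
    split_ifs <;> norm_num
  · have anti : formInner (spinorForm Phi n) σ = -formInner (spinorForm Phi n) σ := by
      conv_lhs => rw [hs, map_neg, formInner_hodgeStar_spinorForm hσ]
    exact self_eq_neg.mp anti

/-- The space `Λ⁴₋` of anti-self-dual 4-forms. -/
def antiSelfDual : Submodule ℝ (Tensor4 ℝ) :=
  FourForm ⊓ LinearMap.ker (LinearMap.id + hodgeStar)

theorem mem_antiSelfDual {σ : Tensor4 ℝ} :
    σ ∈ antiSelfDual ↔ σ ∈ FourForm ∧ σ = -hodgeStar σ := by
  rw [antiSelfDual, Submodule.mem_inf, LinearMap.mem_ker, LinearMap.add_apply, LinearMap.id_apply,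
    eq_neg_iff_add_eq_zero]

/-- The increasing quadruples starting with `0`, one from each complementary pair: they index the
free components of an anti-self-dual form. -/
def increasingFromZero : Finset Quad := {I ∈ increasing | I.1 = 0}

theorem card_increasingFromZero : increasingFromZero.card = 35 := by
  decide +kernel

theorem leviCivitaPair_eq_zero_of_mem {I J : Quad} (hI : I ∈ increasingFromZero)
    (hJ : J ∈ increasingFromZero) : leviCivitaPair I J = 0 := by
  have : orderSign I.1 J.1 = 0 := by
    rw [(Finset.mem_filter.mp hI).2, (Finset.mem_filter.mp hJ).2]
    rfl
  simp only [leviCivitaPair, component, leviCivita, this, mul_zero, zero_mul]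

theorem leviCivitaPair_eq_zero_of_notMem {I J : Quad} (hI : I ∈ increasing) (hJ : J ∈ increasing)
    (hI₀ : I ∉ increasingFromZero) (hJ₀ : J ∉ increasingFromZero) : leviCivitaPair I J = 0 := by
  obtain ⟨a, b, c, d⟩ := I
  obtain ⟨i, j, k, l⟩ := J
  simp only [increasingFromZero, Finset.mem_filter, mem_increasing] at hI hJ hI₀ hJ₀
  have entries_ne_zero : ∀ m, ![a, b, c, d, i, j, k, l] m ≠ 0 := by
    simpa [Fin.forall_fin_succ] using
      (by omega : a ≠ 0 ∧ b ≠ 0 ∧ c ≠ 0 ∧ d ≠ 0 ∧ i ≠ 0 ∧ j ≠ 0 ∧ k ≠ 0 ∧ l ≠ 0)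
  have eps8_eq_zero : eps8 ![a, b, c, d, i, j, k, l] = 0 :=
    dif_neg fun h => let ⟨m, hm⟩ := h.surjective 0; entries_ne_zero m hm
  rw [eps8_eq_leviCivita] at eps8_eq_zero
  exact_mod_cast eps8_eq_zero

/-- The components of an anti-self-dual form at the quadruples containing `0`, as coordinates on
`Λ⁴₋`. -/
def antiSelfDualRestrict : antiSelfDual →ₗ[ℝ] increasingFromZero → ℝ where
  toFun σ I := component σ.1 I.1
  map_add' _ _ := rfl
  map_smul' _ _ := rfl

theorem antiSelfDualRestrict_injective : Function.Injective antiSelfDualRestrict := by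
  rw [← LinearMap.ker_eq_bot, LinearMap.ker_eq_bot']
  rintro ⟨σ, hσ⟩ hres
  obtain ⟨hσ, hanti⟩ := mem_antiSelfDual.mp hσ
  have eq_zero {I : Quad} (hI : I ∈ increasingFromZero) : component σ I = 0 :=
    congrFun hres ⟨I, hI⟩
  refine Subtype.ext (FourForm.ext_component hσ (zero_mem _) fun I hI => ?_)
  by_cases hI₀ : I ∈ increasingFromZero
  · exact eq_zero hI₀
  have star_eq_zero : component (hodgeStar σ) I = 0 := by
    rw [component_hodgeStar hσ]
    refine Finset.sum_eq_zero fun J hJ => ?_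
    by_cases hJ₀ : J ∈ increasingFromZero
    · rw [eq_zero hJ₀, mul_zero]
    · rw [leviCivitaPair_eq_zero_of_notMem hI hJ hI₀ hJ₀, Int.cast_zero, zero_mul]
  calc component σ I = -component (hodgeStar σ) I := congrArg (component · I) hanti
    _ = 0 := by rw [star_eq_zero, neg_zero]

theorem sub_hodgeStar_mem_antiSelfDual {σ : Tensor4 ℝ} (hσ : σ ∈ FourForm) :
    σ - hodgeStar σ ∈ antiSelfDual := by
  refine mem_antiSelfDual.mpr ⟨sub_mem hσ (hodgeStar_mem_fourForm σ), ?_⟩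
  rw [map_sub, hodgeStar_hodgeStar hσ, neg_sub]

theorem antiSelfDualRestrict_surjective : Function.Surjective antiSelfDualRestrict := by
  intro f
  let g (I : Quad) : ℝ := if h : I ∈ increasingFromZero then f ⟨I, h⟩ else 0
  let ρ : Tensor4 ℝ := ∑ I ∈ increasing, g I • basisForm I
  have hρ : ρ ∈ FourForm := sum_smul_basisForm_mem_fourForm g
  refine ⟨⟨ρ - hodgeStar ρ, sub_hodgeStar_mem_antiSelfDual hρ⟩, funext fun ⟨I, hI⟩ => ?_⟩
  have star_eq_zero : component (hodgeStar ρ) I = 0 := by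
    rw [component_hodgeStar hρ]
    refine Finset.sum_eq_zero fun J hJ => ?_
    by_cases hJ₀ : J ∈ increasingFromZero
    · rw [leviCivitaPair_eq_zero_of_mem hI hJ₀, Int.cast_zero, zero_mul]
    · have hg : g J = 0 := dif_neg hJ₀
      rw [component_sum_smul_basisForm g hJ, hg, mul_zero]
  calc component (ρ - hodgeStar ρ) I = component ρ I - component (hodgeStar ρ) I := rfl
    _ = f ⟨I, hI⟩ := by
      rw [star_eq_zero, sub_zero, component_sum_smul_basisForm g (Finset.mem_of_mem_filter I hI)]
      exact dif_pos hI

theorem finrank_antiSelfDual : Module.finrank ℝ antiSelfDual = 35 := by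
  rw [(LinearEquiv.ofBijective antiSelfDualRestrict
      ⟨antiSelfDualRestrict_injective, antiSelfDualRestrict_surjective⟩).finrank_eq,
    Module.finrank_fintype_fun_eq_card, Fintype.card_coe, card_increasingFromZero]

theorem fourForm_inf_ker_omegaOp : FourForm ⊓ LinearMap.ker OmegaOp = antiSelfDual := by
  ext σ
  rw [Submodule.mem_inf, LinearMap.mem_ker, mem_antiSelfDual]
  exact and_congr_right omegaOp_eq_zero_iff

/-- A 4-form `σ` satisfies `Ω_Φ(σ) = 0` iff `σ` is anti-self-dual; this eigenspace has
dimension 35. -/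
theorem spin7_omega_kernel_anti_self_dual :
    (∀ σ, σ ∈ FourForm →
      ((∀ i j k l, OmegaOp σ i j k l = 0) ↔
        ∀ i j k l, σ i j k l =
          -(1/24) * ∑ a, ∑ b, ∑ c, ∑ d, eps8 ![i, j, k, l, a, b, c, d] * σ a b c d)) ∧
    Module.finrank ℝ ↥(FourForm ⊓ LinearMap.ker OmegaOp) = 35 := by
  refine ⟨fun σ hσ => ?_, fourForm_inf_ker_omegaOp ▸ finrank_antiSelfDual⟩
  have kernel_iff := omegaOp_eq_zero_iff hσ
  simp only [funext_iff] at kernel_iff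
  simpa only [Pi.zero_apply, Pi.neg_apply, hodgeStar_apply, neg_mul] using kernel_iff
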